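/- arXiv:2201.05935 — 3 statements merged into one kernel-verified Lean document; each statement's English description precedes it below -/
import Mathlib

section
/- Let H₀ be a p×p real matrix and let U, V be p×q real matrices (q ≤ p) such that VᵀV is invertible. Define H* = H₀(I_p − V(VᵀV)⁻¹Vᵀ) + U(VᵀV)⁻¹Vᵀ. Then H* satisfies the multiple secant condition H*V = U, and H* minimizes the Frobenius distance to H₀ among all matrices satisfying this condition: for every p×p matrix H with HV = U, ‖H* − H₀‖_F ≤ ‖H − H₀‖_F. -/
open Matrix

/-- Frobenius norm of a real matrix. -/
noncomputable def frob {m n : ℕ} (A : Matrix (Fin m) (Fin n) ℝ) : ℝ :=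
  Real.sqrt (∑ i, ∑ j, (A i j) ^ 2)

/-!
If `H * V = U`, then `H - H*` annihilates `V`, while `H* - H₀` has the form `C * Vᴴ`. Two such
matrices are orthogonal for the inner product `tr (A * Bᴴ)`, so Pythagoras gives
`‖H - H₀‖² = ‖H - H*‖² + ‖H* - H₀‖²`.
-/

section Frobenius

open scoped Matrix.Norms.Frobenius

variable {𝕜 m n : Type*} [RCLike 𝕜] [Fintype m] [Fintype n]

theorem frobenius_norm_sq_eq_re_trace (A : Matrix m n 𝕜) :
    ‖A‖ ^ 2 = RCLike.re (trace (A * Aᴴ)) := by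
  have sum_nonneg : 0 ≤ ∑ i, ∑ j, ‖A i j‖ ^ 2 := by positivity
  have norm_eq_sqrt : ‖A‖ = √(∑ i, ∑ j, ‖A i j‖ ^ 2) := by
    simp only [frobenius_norm_def, Real.rpow_two, Real.sqrt_eq_rpow]
  rw [norm_eq_sqrt, Real.sq_sqrt sum_nonneg]
  simp only [trace, diag_apply, mul_apply, conjTranspose_apply, RCLike.star_def, RCLike.mul_conj,
    map_sum, ← RCLike.ofReal_pow, RCLike.ofReal_re]

theorem frobenius_norm_add_sq_of_re_trace_eq_zero {A B : Matrix m n 𝕜}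
    (h : RCLike.re (trace (A * Bᴴ)) = 0) : ‖A + B‖ ^ 2 = ‖A‖ ^ 2 + ‖B‖ ^ 2 := by
  have h_swap : RCLike.re (trace (B * Aᴴ)) = 0 := by
    rw [← conjTranspose_conjTranspose B, ← conjTranspose_mul, trace_conjTranspose,
      RCLike.star_def, RCLike.conj_re, h]
  simp only [frobenius_norm_sq_eq_re_trace, conjTranspose_add, Matrix.add_mul, Matrix.mul_add,
    trace_add, map_add, h, h_swap]
  ring

theorem frob_eq_frobenius_norm {m n : ℕ} (A : Matrix (Fin m) (Fin n) ℝ) : frob A = ‖A‖ := by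
  simp only [frob, frobenius_norm_def, Real.sqrt_eq_rpow, Real.rpow_two, Real.norm_eq_abs, sq_abs]

end Frobenius

section BQNUpdate

variable {R l m n : Type*} [CommRing R] [StarRing R] [Fintype m] [DecidableEq m]
  [Fintype n] [DecidableEq n]

/-- The BQN inverse-Jacobian update of `H₀` for the multiple secant condition `H * V = U`:
it sends the columns of `V` to those of `U` and agrees with `H₀` on their orthogonal complement.
Rectangular `H₀` is allowed, and over `ℝ` the conjugate transpose is the transpose. If `Vᴴ * V`
is not invertible, its junk inverse `0` makes the update equal to `H₀`. -/
noncomputable def bqnUpdate (H₀ : Matrix l m R) (U : Matrix l n R) (V : Matrix m n R) :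
    Matrix l m R :=
  H₀ * (1 - V * (Vᴴ * V)⁻¹ * Vᴴ) + U * (Vᴴ * V)⁻¹ * Vᴴ

theorem bqnUpdate_eq_add (H₀ : Matrix l m R) (U : Matrix l n R) (V : Matrix m n R) :
    bqnUpdate H₀ U V = H₀ + (U - H₀ * V) * (Vᴴ * V)⁻¹ * Vᴴ := by
  simp only [bqnUpdate, Matrix.mul_sub, Matrix.sub_mul, Matrix.mul_one, Matrix.mul_assoc]
  abel

theorem bqnUpdate_mul (H₀ : Matrix l m R) (U : Matrix l n R) {V : Matrix m n R}
    (hV : IsUnit (Vᴴ * V)) : bqnUpdate H₀ U V * V = U := by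
  have gram_inv_mul : (Vᴴ * V)⁻¹ * (Vᴴ * V) = 1 :=
    nonsing_inv_mul _ ((isUnit_iff_isUnit_det _).mp hV)
  calc bqnUpdate H₀ U V * V
      = H₀ * V + (U - H₀ * V) * ((Vᴴ * V)⁻¹ * (Vᴴ * V)) := by
        simp only [bqnUpdate_eq_add, Matrix.add_mul, Matrix.mul_assoc]
    _ = U := by rw [gram_inv_mul, Matrix.mul_one, add_sub_cancel]

theorem mul_conjTranspose_bqnUpdate_sub_eq_zero {k : Type*} (H₀ : Matrix l m R) (U : Matrix l n R)
    {V : Matrix m n R} {A : Matrix k m R} (hA : A * V = 0) :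
    A * (bqnUpdate H₀ U V - H₀)ᴴ = 0 := by
  rw [bqnUpdate_eq_add, add_sub_cancel_left, conjTranspose_mul, conjTranspose_conjTranspose,
    ← Matrix.mul_assoc, hA, Matrix.zero_mul]

end BQNUpdate

section Minimality

open scoped Matrix.Norms.Frobenius

variable {𝕜 l m n : Type*} [RCLike 𝕜] [Fintype l] [Fintype m] [DecidableEq m]
  [Fintype n] [DecidableEq n]

theorem frobenius_norm_sub_sq_eq_add_bqnUpdate (H₀ : Matrix l m 𝕜) {U : Matrix l n 𝕜}
    {V : Matrix m n 𝕜} (hV : IsUnit (Vᴴ * V)) {H : Matrix l m 𝕜} (hH : H * V = U) :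
    ‖H - H₀‖ ^ 2 = ‖H - bqnUpdate H₀ U V‖ ^ 2 + ‖bqnUpdate H₀ U V - H₀‖ ^ 2 := by
  have sub_mul_eq_zero : (H - bqnUpdate H₀ U V) * V = 0 := by
    rw [Matrix.sub_mul, hH, bqnUpdate_mul H₀ U hV, sub_self]
  have orthogonal :
      RCLike.re (trace ((H - bqnUpdate H₀ U V) * (bqnUpdate H₀ U V - H₀)ᴴ)) = 0 := by
    rw [mul_conjTranspose_bqnUpdate_sub_eq_zero H₀ U sub_mul_eq_zero, trace_zero, map_zero]
  rw [← frobenius_norm_add_sq_of_re_trace_eq_zero orthogonal, sub_add_sub_cancel]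

theorem stmt_11_general (H₀ : Matrix l m 𝕜) (U : Matrix l n 𝕜) (V : Matrix m n 𝕜)
    (hV : IsUnit (Vᴴ * V)) :
    bqnUpdate H₀ U V * V = U ∧
      ∀ H : Matrix l m 𝕜, H * V = U → ‖bqnUpdate H₀ U V - H₀‖ ≤ ‖H - H₀‖ := by
  refine ⟨bqnUpdate_mul H₀ U hV, fun H hH => ?_⟩
  have pythagoras := frobenius_norm_sub_sq_eq_add_bqnUpdate H₀ hV hH
  refine (sq_le_sq₀ (norm_nonneg _) (norm_nonneg _)).mp ?_
  exact pythagoras ▸ le_add_of_nonneg_left (sq_nonneg _)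

end Minimality

/-- the BQN update solves the constrained minimization problem.
For `H₀ : p×p`, `U, V : p×q` (`q ≤ p`) with `VᵀV` invertible, the matrix
`H* = H₀(I − V(VᵀV)⁻¹Vᵀ) + U(VᵀV)⁻¹Vᵀ` satisfies the multiple secant condition `H*V = U`
and minimizes `‖H − H₀‖_F` among all `H` with `HV = U`. -/
theorem stmt_11 {p q : ℕ} (hq : q ≤ p)
    (H₀ : Matrix (Fin p) (Fin p) ℝ) (U V : Matrix (Fin p) (Fin q) ℝ)
    (hV : IsUnit (Vᵀ * V))
    (Hstar : Matrix (Fin p) (Fin p) ℝ)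
    (hHstar : Hstar = H₀ * (1 - V * (Vᵀ * V)⁻¹ * Vᵀ) + U * (Vᵀ * V)⁻¹ * Vᵀ) :
    Hstar * V = U ∧
      ∀ H : Matrix (Fin p) (Fin p) ℝ, H * V = U →
        frob (Hstar - H₀) ≤ frob (H - H₀) := by
  simpa only [hHstar, frob_eq_frobenius_norm, bqnUpdate, conjTranspose_eq_transpose_of_trivial]
    using stmt_11_general H₀ U V hV
end

section
/- Let G : ℝ^p → ℝ^p be differentiable on an open convex set D ⊆ ℝ^p containing a point x* with G(x*) = 0 and dG(x*) nonsingular, and suppose ‖dG(x) − dG(x*)‖ ≤ K‖x − x*‖^d for all x ∈ D, for constants K ≥ 0 and d > 0. Then for every x ∈ D and every p×p real matrix H, the quasi-Newton step x̄ = x − H G(x) satisfies ‖x̄ − x*‖ ≤ (‖H‖·K·‖x − x*‖^d + ‖dG(x*)‖·‖H − dG(x*)⁻¹‖)·‖x − x*‖. -/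
/-!
Since `G(x*) = 0`, the mean value inequality on the segment from `x*` to `x` says that
`A (x - x*)`, with `A = dG(x*)`, approximates `G x` up to an error `ω ‖x - x*‖ * ‖x - x*‖`, where
the modulus `ω` is `r ↦ K * r ^ d` in the Hölder case. The new error is
`v - H (G x)` with `v = x - x*`, and writing `v = A⁻¹ (A v)` splits it as
`-(H (G x - A v)) - (H - A⁻¹) (A v)`: the defect of the linearization plus the defect of `H` as
an inverse of `A`.
-/

section LinearAlgebra

variable {𝕜 E F : Type*} [NontriviallyNormedField 𝕜]
  [SeminormedAddCommGroup E] [NormedSpace 𝕜 E] [SeminormedAddCommGroup F] [NormedSpace 𝕜 F]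

theorem norm_sub_apply_le_of_leftInverse {A : E →L[𝕜] F} {B : F →L[𝕜] E}
    (hBA : Function.LeftInverse B A) (H : F →L[𝕜] E) (v : E) (w : F) :
    ‖v - H w‖ ≤ ‖H‖ * ‖w - A v‖ + ‖A‖ * ‖H - B‖ * ‖v‖ := by
  have split_error : v - H w = -H (w - A v) - (H - B) (A v) := by
    rw [sub_apply, hBA v, map_sub]
    abel
  calc ‖v - H w‖
      ≤ ‖H (w - A v)‖ + ‖(H - B) (A v)‖ := by
        rw [split_error, ← norm_neg (H _)]
        exact norm_sub_le _ _
    _ ≤ ‖H‖ * ‖w - A v‖ + ‖H - B‖ * (‖A‖ * ‖v‖) :=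
        add_le_add (H.le_opNorm _) ((H - B).le_opNorm_of_le (A.le_opNorm v))
    _ = ‖H‖ * ‖w - A v‖ + ‖A‖ * ‖H - B‖ * ‖v‖ := by ring

end LinearAlgebra

theorem monotoneOn_const_mul_rpow {K d : ℝ} (hK : 0 ≤ K) (hd : 0 ≤ d) :
    MonotoneOn (fun r : ℝ => K * r ^ d) (Set.Ici 0) := fun _ hr _ _ hrt =>
  mul_le_mul_of_nonneg_left (Real.rpow_le_rpow hr hrt hd) hK

section MeanValue

variable {𝕜 E F : Type*} [NontriviallyNormedField 𝕜] [IsRCLikeNormedField 𝕜]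
  [NormedAddCommGroup E] [NormedSpace ℝ E] [NormedSpace 𝕜 E]
  [NormedAddCommGroup F] [NormedSpace 𝕜 F]
  {s : Set E} {a x : E} {f : E → F} {f' : E → E →L[𝕜] F} {ω : ℝ → ℝ}

theorem norm_image_sub_sub_le_of_norm_hasFDerivWithin_sub_le
    (hs : StarConvex ℝ a s) (hf : ∀ y ∈ s, HasFDerivWithinAt f (f' y) s y)
    (hω : MonotoneOn ω (Set.Ici 0)) (hf' : ∀ y ∈ s, ‖f' y - f' a‖ ≤ ω ‖y - a‖) (hx : x ∈ s) :
    ‖f x - f a - f' a (x - a)‖ ≤ ω ‖x - a‖ * ‖x - a‖ := by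
  have segment_subset : segment ℝ a x ⊆ s := hs.segment_subset hx
  have norm_deriv_sub_le : ∀ y ∈ segment ℝ a x, ‖f' y - f' a‖ ≤ ω ‖x - a‖ := fun y hy =>
    (hf' y (segment_subset hy)).trans
      (hω (norm_nonneg _) (norm_nonneg _) (norm_sub_le_of_mem_segment hy))
  exact (convex_segment a x).norm_image_sub_le_of_norm_hasFDerivWithin_le'
    (fun y hy => (hf y (segment_subset hy)).mono segment_subset) norm_deriv_sub_le
    (left_mem_segment ℝ a x) (right_mem_segment ℝ a x)

theorem stmt_13_general (hs : StarConvex ℝ a s) (hf : ∀ y ∈ s, HasFDerivWithinAt f (f' y) s y)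
    (hroot : f a = 0) (hω : MonotoneOn ω (Set.Ici 0))
    (hf' : ∀ y ∈ s, ‖f' y - f' a‖ ≤ ω ‖y - a‖)
    {B : F →L[𝕜] E} (hB : Function.LeftInverse B (f' a)) (hx : x ∈ s) (H : F →L[𝕜] E) :
    ‖(x - H (f x)) - a‖ ≤ (‖H‖ * ω ‖x - a‖ + ‖f' a‖ * ‖H - B‖) * ‖x - a‖ := by
  have linearization_error : ‖f x - f' a (x - a)‖ ≤ ω ‖x - a‖ * ‖x - a‖ := by
    simpa only [hroot, sub_zero] using
      norm_image_sub_sub_le_of_norm_hasFDerivWithin_sub_le hs hf hω hf' hx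
  calc ‖(x - H (f x)) - a‖
      = ‖(x - a) - H (f x)‖ := by rw [sub_right_comm]
    _ ≤ ‖H‖ * ‖f x - f' a (x - a)‖ + ‖f' a‖ * ‖H - B‖ * ‖x - a‖ :=
        norm_sub_apply_le_of_leftInverse hB H _ _
    _ ≤ ‖H‖ * (ω ‖x - a‖ * ‖x - a‖) + ‖f' a‖ * ‖H - B‖ * ‖x - a‖ := by gcongr
    _ = (‖H‖ * ω ‖x - a‖ + ‖f' a‖ * ‖H - B‖) * ‖x - a‖ := by ring

end MeanValue

/-- key quasi-Newton step estimate.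
If `G` is differentiable on an open convex `D ∋ x*` with `G(x*) = 0`, `dG(x*)` nonsingular
(with inverse `Ginv`), and `‖dG(x) − dG(x*)‖ ≤ K‖x − x*‖^d` on `D`, then for every `x ∈ D`
and every matrix `H` (acting as a linear map), the quasi-Newton step `x̄ = x − H G(x)`
satisfies `‖x̄ − x*‖ ≤ (‖H‖·K·‖x − x*‖^d + ‖dG(x*)‖·‖H − dG(x*)⁻¹‖)·‖x − x*‖`. -/
theorem stmt_13 {p : ℕ} {D : Set (EuclideanSpace ℝ (Fin p))}
    (hDopen : IsOpen D) (hDconv : Convex ℝ D)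
    (G : EuclideanSpace ℝ (Fin p) → EuclideanSpace ℝ (Fin p))
    (dG : EuclideanSpace ℝ (Fin p) →
      (EuclideanSpace ℝ (Fin p) →L[ℝ] EuclideanSpace ℝ (Fin p)))
    (hdiff : ∀ x ∈ D, HasFDerivAt G (dG x) x)
    (xstar : EuclideanSpace ℝ (Fin p)) (hxstar : xstar ∈ D)
    (hroot : G xstar = 0)
    (K d : ℝ) (hK : 0 ≤ K) (hd : 0 < d)
    (hHolder : ∀ x ∈ D, ‖dG x - dG xstar‖ ≤ K * ‖x - xstar‖ ^ d)
    (Ginv : EuclideanSpace ℝ (Fin p) →L[ℝ] EuclideanSpace ℝ (Fin p))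
    (hinv₁ : Ginv.comp (dG xstar) = ContinuousLinearMap.id ℝ _)
    (hinv₂ : (dG xstar).comp Ginv = ContinuousLinearMap.id ℝ _) :
    ∀ x ∈ D, ∀ H : EuclideanSpace ℝ (Fin p) →L[ℝ] EuclideanSpace ℝ (Fin p),
      ‖(x - H (G x)) - xstar‖ ≤
        (‖H‖ * K * ‖x - xstar‖ ^ d + ‖dG xstar‖ * ‖H - Ginv‖) * ‖x - xstar‖ := by
  intro x hx H
  simpa only [mul_assoc] using
    stmt_13_general (hDconv.starConvex hxstar) (fun y hy => (hdiff y hy).hasFDerivWithinAt)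
      hroot (monotoneOn_const_mul_rpow hK hd.le) hHolder (DFunLike.congr_fun hinv₁) hx H
end

section
/- For every real number y, cos(y + sin(y)) ≤ cos(y) − (1/2)·sin²(y). In particular, the MM iteration x_{k+1} = x_k + sin(x_k) for minimizing cos(x) satisfies the descent property cos(x_{k+1}) ≤ cos(x_k). -/
/-!
Since `cos' = -sin` is 1-Lipschitz, `cos` lies below the quadratic
`cos y - sin y * (x - y) + (x - y) ^ 2 / 2` in `x`, which touches it at `y`. Its minimizer is
`x = y + sin y` and its minimum is `cos y - sin y ^ 2 / 2`.
-/

open scoped NNReal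

section QuadraticBound

variable {F : Type*} [NormedAddCommGroup F] [NormedSpace ℝ F] {L : ℝ≥0}

theorem norm_sub_sub_le_of_lipschitzWith_fderiv {E : Type*} [NormedAddCommGroup E]
    [NormedSpace ℝ E] {f : E → F} {f' : E → E →L[ℝ] F}
    (hf : ∀ x, HasFDerivAt f (f' x) x) (hL : LipschitzWith L f') (x y : E) :
    ‖f y - f x - f' x (y - x)‖ ≤ L / 2 * ‖y - x‖ ^ 2 := by
  set v := y - x
  have hasDerivAt_remainder (t : ℝ) :
      HasDerivAt (fun t : ℝ ↦ f (x + t • v) - f x - t • f' x v)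
        (f' (x + t • v) v - f' x v) t := by
    have hline : HasDerivAt (fun t : ℝ ↦ x + t • v) v t := by
      simpa using ((hasDerivAt_id t).smul_const v).const_add x
    have hlinear : HasDerivAt (fun t : ℝ ↦ t • f' x v) (f' x v) t := by
      simpa using (hasDerivAt_id t).smul_const (f' x v)
    exact (((hf _).comp_hasDerivAt t hline).sub_const (f x)).sub hlinear
  have hasDerivAt_quadratic (t : ℝ) :
      HasDerivAt (fun t : ℝ ↦ L / 2 * ‖v‖ ^ 2 * t ^ 2) (L * t * ‖v‖ ^ 2) t := by
    convert! (hasDerivAt_pow 2 t).const_mul (L / 2 * ‖v‖ ^ 2) using 1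
    ring
  have norm_deriv_le {t : ℝ} (ht : 0 ≤ t) :
      ‖f' (x + t • v) v - f' x v‖ ≤ L * t * ‖v‖ ^ 2 := by
    calc ‖f' (x + t • v) v - f' x v‖
        ≤ ‖f' (x + t • v) - f' x‖ * ‖v‖ := (f' (x + t • v) - f' x).le_opNorm v
      _ ≤ L * ‖x + t • v - x‖ * ‖v‖ := by gcongr; exact hL.norm_sub_le _ _
      _ = L * t * ‖v‖ ^ 2 := by
        rw [add_sub_cancel_left, norm_smul, Real.norm_of_nonneg ht]
        ring
  have remainder_le := image_norm_le_of_norm_deriv_right_le_deriv_boundary (a := 0) (b := 1)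
    (fun t _ ↦ (hasDerivAt_remainder t).continuousAt.continuousWithinAt)
    (fun t _ ↦ (hasDerivAt_remainder t).hasDerivWithinAt) (by simp) hasDerivAt_quadratic
    (fun t ht ↦ norm_deriv_le ht.1) (Set.right_mem_Icc.2 zero_le_one)
  simpa [v] using remainder_le

theorem norm_sub_sub_le_of_lipschitzWith_deriv {f f' : ℝ → F}
    (hf : ∀ x, HasDerivAt f (f' x) x) (hL : LipschitzWith L f') (x y : ℝ) :
    ‖f y - f x - (y - x) • f' x‖ ≤ L / 2 * (y - x) ^ 2 := by
  have hL' : LipschitzWith L fun x ↦ ContinuousLinearMap.toSpanSingleton ℝ (f' x) := by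
    simpa [Function.comp_def] using (ContinuousLinearMap.toSpanSingletonLIE ℝ F).lipschitz.comp hL
  simpa using norm_sub_sub_le_of_lipschitzWith_fderiv (fun x ↦ (hf x).hasFDerivAt) hL' x y

end QuadraticBound

theorem cos_le_quadratic (x y : ℝ) :
    Real.cos x ≤ Real.cos y - Real.sin y * (x - y) + 1 / 2 * (x - y) ^ 2 := by
  have remainder_le : |Real.cos x - Real.cos y - (x - y) * -Real.sin y| ≤ 1 / 2 * (x - y) ^ 2 :=
    norm_sub_sub_le_of_lipschitzWith_deriv Real.hasDerivAt_cos Real.lipschitzWith_sin.neg y x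
  linarith [le_of_abs_le remainder_le]

theorem cos_add_sin_le (y : ℝ) :
    Real.cos (y + Real.sin y) ≤ Real.cos y - 1 / 2 * Real.sin y ^ 2 := by
  calc Real.cos (y + Real.sin y)
      ≤ Real.cos y - Real.sin y * (y + Real.sin y - y) + 1 / 2 * (y + Real.sin y - y) ^ 2 :=
        cos_le_quadratic _ _
    _ = Real.cos y - 1 / 2 * Real.sin y ^ 2 := by ring

/-- descent property of the MM update `F(y) = y + sin y` for `cos`:
`cos(y + sin y) ≤ cos y − (1/2) sin² y` for all real `y`; in particular any sequence with
`x_{k+1} = x_k + sin x_k` satisfies `cos x_{k+1} ≤ cos x_k`. -/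
theorem stmt_15 :
    (∀ y : ℝ, Real.cos (y + Real.sin y) ≤ Real.cos y - (1 / 2) * Real.sin y ^ 2) ∧
    (∀ x : ℕ → ℝ, (∀ k, x (k + 1) = x k + Real.sin (x k)) →
      ∀ k, Real.cos (x (k + 1)) ≤ Real.cos (x k)) := by
  refine ⟨cos_add_sin_le, fun x hx k ↦ ?_⟩
  calc Real.cos (x (k + 1))
      = Real.cos (x k + Real.sin (x k)) := by rw [hx]
    _ ≤ Real.cos (x k) - 1 / 2 * Real.sin (x k) ^ 2 := cos_add_sin_le _
    _ ≤ Real.cos (x k) := sub_le_self _ (by positivity)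
end
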